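/- arXiv:1307.0359 — 2 statements merged into one kernel-verified Lean document; each statement's English description precedes it below -/
import Mathlib

section
/- Lemma (single-branch variation estimate). Let [a,b] and [c,d] be nondegenerate compact intervals and let S : [a,b] → [c,d] be a C² bijection with S′(x) ≠ 0 for all x ∈ [a,b]. Set g = 1/|S′|, d₀ = sup_{x∈[a,b]} 1/|S′(x)| and 𝒞 = sup_{x∈[a,b]} |S″(x)|/|S′(x)|², assumed finite. Then for every function f : [a,b] → ℝ of bounded variation, V_{[c,d]}((f·g)∘S^{−1}) ≤ d₀·V_{[a,b]}(f) + 𝒞·∫_a^b |f(x)| dx. -/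
open MeasureTheory Set
open scoped ENNReal

/-!
Since `S'` does not vanish it has constant sign, so the inverse branch is monotone or antitone, and
composing with it does not increase variation. It remains to bound the variation of `g • f`, where
`g = 1 / |S'|` is bounded by `d₀` and is `𝒞`-Lipschitz because `(1 / S')' = -S'' / S'²`.

On a single interval `[x, y]`, passing from `g x • f x` to `g y • f y` through `g x • f t` and
`g y • f t` costs at most `d₀ V_{[x,y]}(f) + 𝒞 (y - x) ‖f t‖`, for every `t ∈ [x, y]`. Averaging
over `t` turns the last term into `𝒞 ∫_x^y ‖f‖`. Both terms are now additive over adjacent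
intervals, so the estimate follows by summing over a partition.
-/

open scoped NNReal

lemma sum_lintegral_Ioc_adjacent {α : Type*} [LinearOrder α] [TopologicalSpace α]
    [OrderClosedTopology α] [MeasurableSpace α] [OpensMeasurableSpace α] (μ : Measure α)
    (F : α → ℝ≥0∞) {u : ℕ → α} (hu : Monotone u) (n : ℕ) :
    ∑ i ∈ Finset.range n, ∫⁻ t in Ioc (u i) (u (i + 1)), F t ∂μ =
      ∫⁻ t in Ioc (u 0) (u n), F t ∂μ := by
  induction n with
  | zero => simp
  | succ n ih =>
    rw [Finset.sum_range_succ, ih,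
      ← lintegral_union measurableSet_Ioc (Ioc_disjoint_Ioc_of_le le_rfl),
      Ioc_union_Ioc_eq_Ioc (hu n.zero_le) (hu n.le_succ)]

lemma edist_add_edist_le_eVariationOn_Icc {α E : Type*} [LinearOrder α] [PseudoEMetricSpace E]
    (f : α → E) {x t y : α} (ht : t ∈ Icc x y) :
    edist (f x) (f t) + edist (f t) (f y) ≤ eVariationOn f (Icc x y) := by
  have hadd := eVariationOn.Icc_add_Icc f ht.1 ht.2 (mem_univ t)
  simp only [univ_inter] at hadd
  rw [← hadd]
  exact add_le_add
    (eVariationOn.edist_le f (left_mem_Icc.2 ht.1) (right_mem_Icc.2 ht.1))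
    (eVariationOn.edist_le f (left_mem_Icc.2 ht.2) (right_mem_Icc.2 ht.2))

lemma eVariationOn_comp_le_of_leftInvOn {α β E : Type*} [LinearOrder α] [LinearOrder β]
    [PseudoEMetricSpace E] {φ : α → β} {ψ : β → α} {s : Set α} {t : Set β}
    (hφ : MonotoneOn φ s ∨ AntitoneOn φ s) (hsurj : SurjOn φ s t) (hinv : LeftInvOn ψ φ s)
    (h : α → E) : eVariationOn (h ∘ ψ) t ≤ eVariationOn h s := by
  have hmaps : MapsTo ψ t s := hinv.mapsTo hsurj
  have hright : RightInvOn ψ φ t := hinv.rightInvOn_image.mono hsurj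
  rcases hφ with hmono | hanti
  · exact eVariationOn.comp_le_of_monotoneOn h ψ
      (Function.monotoneOn_of_rightInvOn_of_mapsTo hmono hright hmaps) hmaps
  · exact eVariationOn.comp_le_of_antitoneOn h ψ
      (Function.antitoneOn_of_rightInvOn_of_mapsTo hanti hright hmaps) hmaps

section Smul

variable {𝕜 E : Type*} [SeminormedRing 𝕜] [SeminormedAddCommGroup E] [Module 𝕜 E]
  [IsBoundedSMul 𝕜 E]

lemma edist_smul_smul_le (c₁ c₂ : 𝕜) (v₁ v v₂ : E) :
    edist (c₁ • v₁) (c₂ • v₂) ≤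
      ‖c₁‖ₑ * edist v₁ v + edist c₁ c₂ * ‖v‖ₑ + ‖c₂‖ₑ * edist v v₂ :=
  calc edist (c₁ • v₁) (c₂ • v₂)
    _ ≤ edist (c₁ • v₁) (c₁ • v) + edist (c₁ • v) (c₂ • v) + edist (c₂ • v) (c₂ • v₂) :=
      edist_triangle4 ..
    _ ≤ _ := by
      simp only [edist_eq_enorm_sub, ← smul_sub, ← sub_smul]
      gcongr <;> exact enorm_smul_le

lemma edist_smul_le_eVariationOn_add_lintegral {f : ℝ → E} {g : ℝ → 𝕜} {x y : ℝ} (hxy : x ≤ y)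
    {D : ℝ≥0∞} {C : ℝ≥0} (hgx : ‖g x‖ₑ ≤ D) (hgy : ‖g y‖ₑ ≤ D)
    (hgC : edist (g x) (g y) ≤ C * edist x y) :
    edist (g x • f x) (g y • f y) ≤
      D * eVariationOn f (Icc x y) + C * ∫⁻ t in Ioc x y, ‖f t‖ₑ := by
  rcases hxy.eq_or_lt with rfl | hlt
  · simp
  set V := eVariationOn f (Icc x y)
  have hvol : volume (Ioc x y) = edist x y := by
    rw [Real.volume_Ioc, edist_comm, edist_dist, Real.dist_eq, abs_of_nonneg (sub_nonneg.2 hxy)]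
  have pointwise : ∀ t ∈ Ioc x y,
      edist (g x • f x) (g y • f y) ≤ D * V + C * edist x y * ‖f t‖ₑ := fun t ht =>
    calc edist (g x • f x) (g y • f y)
      _ ≤ ‖g x‖ₑ * edist (f x) (f t) + edist (g x) (g y) * ‖f t‖ₑ + ‖g y‖ₑ * edist (f t) (f y) :=
        edist_smul_smul_le ..
      _ ≤ D * edist (f x) (f t) + C * edist x y * ‖f t‖ₑ + D * edist (f t) (f y) := by gcongr
      _ = D * (edist (f x) (f t) + edist (f t) (f y)) + C * edist x y * ‖f t‖ₑ := by ring
      _ ≤ D * V + C * edist x y * ‖f t‖ₑ := by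
        gcongr
        exact edist_add_edist_le_eVariationOn_Icc f (Ioc_subset_Icc_self ht)
  have integrated : edist (g x • f x) (g y • f y) * edist x y ≤
      (D * V + C * ∫⁻ t in Ioc x y, ‖f t‖ₑ) * edist x y :=
    calc edist (g x • f x) (g y • f y) * edist x y
      _ = ∫⁻ _ in Ioc x y, edist (g x • f x) (g y • f y) := by rw [setLIntegral_const, hvol]
      _ ≤ ∫⁻ t in Ioc x y, (D * V + C * edist x y * ‖f t‖ₑ) :=
        setLIntegral_mono' measurableSet_Ioc pointwise
      _ = D * V * edist x y + C * edist x y * ∫⁻ t in Ioc x y, ‖f t‖ₑ := by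
        rw [lintegral_add_left measurable_const, setLIntegral_const, hvol,
          lintegral_const_mul' _ _ (ENNReal.mul_ne_top ENNReal.coe_ne_top (edist_ne_top x y))]
      _ = (D * V + C * ∫⁻ t in Ioc x y, ‖f t‖ₑ) * edist x y := by ring
  exact (ENNReal.mul_le_mul_iff_left (edist_pos.2 hlt.ne).ne' (edist_ne_top x y)).1 integrated

theorem eVariationOn_smul_le_of_lipschitzOnWith {f : ℝ → E} {g : ℝ → 𝕜} {s : Set ℝ}
    (hs : s.OrdConnected) {D : ℝ≥0∞} {C : ℝ≥0} (hgD : ∀ x ∈ s, ‖g x‖ₑ ≤ D)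
    (hgC : LipschitzOnWith C g s) :
    eVariationOn (fun x => g x • f x) s ≤ D * eVariationOn f s + C * ∫⁻ x in s, ‖f x‖ₑ := by
  refine iSup_le fun ⟨n, u, hu, hus⟩ => ?_
  calc ∑ i ∈ Finset.range n, edist (g (u (i + 1)) • f (u (i + 1))) (g (u i) • f (u i))
    _ ≤ ∑ i ∈ Finset.range n, (D * eVariationOn f (Icc (u i) (u (i + 1))) +
          C * ∫⁻ t in Ioc (u i) (u (i + 1)), ‖f t‖ₑ) := by
      gcongr with i
      rw [edist_comm]
      exact edist_smul_le_eVariationOn_add_lintegral (hu i.le_succ) (hgD _ (hus i))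
        (hgD _ (hus (i + 1))) (hgC (hus i) (hus (i + 1)))
    _ = D * eVariationOn f (Icc (u 0) (u n)) + C * ∫⁻ t in Ioc (u 0) (u n), ‖f t‖ₑ := by
      rw [Finset.sum_add_distrib, ← Finset.mul_sum, ← Finset.mul_sum, eVariationOn.sum' f hu,
        sum_lintegral_Ioc_adjacent volume _ hu]
    _ ≤ D * eVariationOn f s + C * ∫⁻ x in s, ‖f x‖ₑ := by
      have hsub : Icc (u 0) (u n) ⊆ s := hs.out (hus 0) (hus n)
      gcongr
      · exact eVariationOn.mono f hsub
      · exact Ioc_subset_Icc_self.trans hsub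

end Smul

lemma monotoneOn_or_antitoneOn_of_hasDerivWithinAt_ne_zero {s : Set ℝ} (hs : Convex ℝ s)
    {f f' : ℝ → ℝ} (hf : ∀ x ∈ s, HasDerivWithinAt f (f' x) s x) (hf' : ∀ x ∈ s, f' x ≠ 0) :
    MonotoneOn f s ∨ AntitoneOn f s := by
  have hcont : ContinuousOn f s := fun x hx => (hf x hx).continuousWithinAt
  have hderiv : ∀ x ∈ interior s, HasDerivWithinAt f (f' x) (interior s) x := fun x hx =>
    (hf x (interior_subset hx)).mono interior_subset
  rcases hasDerivWithinAt_forall_lt_or_forall_gt_of_forall_ne hs hf hf' with hneg | hpos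
  · exact .inr (antitoneOn_of_hasDerivWithinAt_nonpos hs hcont hderiv fun x hx =>
      (hneg x (interior_subset hx)).le)
  · exact .inl (monotoneOn_of_hasDerivWithinAt_nonneg hs hcont hderiv fun x hx =>
      (hpos x (interior_subset hx)).le)

lemma lipschitzOnWith_inv_norm_of_norm_deriv_div_sq_le {𝕜 𝕜' : Type*} [RCLike 𝕜]
    [NontriviallyNormedField 𝕜'] [NormedAlgebra 𝕜 𝕜'] {s : Set 𝕜} (hs : Convex ℝ s)
    {h h' : 𝕜 → 𝕜'} {C : ℝ≥0} (hh : ∀ x ∈ s, HasDerivWithinAt h (h' x) s x)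
    (h_ne : ∀ x ∈ s, h x ≠ 0) (hC : ∀ x ∈ s, ‖h' x‖ / ‖h x‖ ^ 2 ≤ C) :
    LipschitzOnWith C (fun x => ‖h x‖⁻¹) s := by
  have hderiv : ∀ x ∈ s, HasDerivWithinAt h⁻¹ (-h' x / h x ^ 2) s x := fun x hx =>
    (hh x hx).inv (h_ne x hx)
  have hinv : LipschitzOnWith C h⁻¹ s :=
    hs.lipschitzOnWith_of_nnnorm_hasDerivWithin_le hderiv fun x hx => by
      simpa [← NNReal.coe_le_coe] using hC x hx
  simpa [Function.comp_def] using lipschitzWith_one_norm.comp_lipschitzOnWith hinv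

theorem single_branch_variation_estimate_general {E : Type*} [SeminormedAddCommGroup E]
    [NormedSpace ℝ E] {s t : Set ℝ} (hs : s.OrdConnected) {S S' S'' Sinv : ℝ → ℝ}
    (hS : ∀ x ∈ s, HasDerivWithinAt S (S' x) s x)
    (hS' : ∀ x ∈ s, HasDerivWithinAt S' (S'' x) s x)
    (hS'_ne : ∀ x ∈ s, S' x ≠ 0) (hsurj : SurjOn S s t) (hinv : LeftInvOn Sinv S s) {d₀ 𝒞 : ℝ}
    (hd₀ : ∀ x ∈ s, |S' x|⁻¹ ≤ d₀) (h𝒞 : ∀ x ∈ s, |S'' x| / S' x ^ 2 ≤ 𝒞) (f : ℝ → E) :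
    eVariationOn (fun y => |S' (Sinv y)|⁻¹ • f (Sinv y)) t ≤
      ENNReal.ofReal d₀ * eVariationOn f s + ENNReal.ofReal 𝒞 * ∫⁻ x in s, ‖f x‖ₑ := by
  have hbound : ∀ x ∈ s, ‖|S' x|⁻¹‖ₑ ≤ ENNReal.ofReal d₀ := fun x hx => by
    rw [Real.enorm_of_nonneg (by positivity)]
    exact ENNReal.ofReal_le_ofReal (hd₀ x hx)
  have hlip : LipschitzOnWith 𝒞.toNNReal (fun x => |S' x|⁻¹) s :=
    lipschitzOnWith_inv_norm_of_norm_deriv_div_sq_le hs.convex hS' hS'_ne fun x hx => by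
      simpa only [Real.norm_eq_abs, sq_abs] using (h𝒞 x hx).trans 𝒞.le_coe_toNNReal
  exact (eVariationOn_comp_le_of_leftInvOn
    (monotoneOn_or_antitoneOn_of_hasDerivWithinAt_ne_zero hs.convex hS hS'_ne) hsurj hinv
    fun x => |S' x|⁻¹ • f x).trans (eVariationOn_smul_le_of_lipschitzOnWith hs hbound hlip)

section Compact

variable {α : Type*} [ConditionallyCompleteLinearOrder α] [TopologicalSpace α] [OrderTopology α]
  [MeasurableSpace α] [BorelSpace α] {μ : Measure α} [IsFiniteMeasureOnCompacts μ] {f : α → ℝ}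
  {s : Set α}

lemma integrableOn_of_locallyBoundedVariationOn (hs : IsCompact s)
    (hf : LocallyBoundedVariationOn f s) : IntegrableOn f s μ := by
  obtain ⟨p, q, hp, hq, rfl⟩ := hf.exists_monotoneOn_sub_monotoneOn
  exact (hp.integrableOn_isCompact hs).sub (hq.integrableOn_isCompact hs)

lemma ofReal_mul_eVariationOn_add_ofReal_mul_lintegral_enorm (hs : IsCompact s)
    (hf : BoundedVariationOn f s) {D C : ℝ} (hD : 0 ≤ D) (hC : 0 ≤ C) :
    ENNReal.ofReal D * eVariationOn f s + ENNReal.ofReal C * ∫⁻ x in s, ‖f x‖ₑ ∂μ =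
      ENNReal.ofReal (D * (eVariationOn f s).toReal + C * ∫ x in s, |f x| ∂μ) := by
  have hint : IntegrableOn f s μ :=
    integrableOn_of_locallyBoundedVariationOn hs hf.locallyBoundedVariationOn
  rw [ENNReal.ofReal_add (by positivity) (by positivity), ENNReal.ofReal_mul hD,
    ENNReal.ofReal_mul hC, ENNReal.ofReal_toReal hf]
  simp only [← Real.norm_eq_abs, ofReal_integral_norm_eq_lintegral_enorm hint]

end Compact

/-- **Lemma (single-branch variation estimate).**
Let `[a,b]` and `[c,d]` be nondegenerate compact intervals and `S : [a,b] → [c,d]` a `C²`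
bijection with nonvanishing derivative.  Set `g = 1/|S′|`, let `d₀` bound `1/|S′|` and
`𝒞` bound `|S″|/|S′|²` on `[a,b]` (the suprema being finite).  Then for every function
`f : [a,b] → ℝ` of bounded variation,
`V_{[c,d]}((f·g) ∘ S⁻¹) ≤ d₀ · V_{[a,b]}(f) + 𝒞 · ∫_a^b |f|`. -/
theorem single_branch_variation_estimate
    (a b c d : ℝ) (hab : a < b) (hcd : c < d)
    (S : ℝ → ℝ) (hS : ContDiffOn ℝ 2 S (Icc a b))
    (hbij : Set.BijOn S (Icc a b) (Icc c d))
    (hS' : ∀ x ∈ Icc a b, derivWithin S (Icc a b) x ≠ 0)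
    (d₀ 𝒞 : ℝ)
    (hd₀ : ∀ x ∈ Icc a b, |derivWithin S (Icc a b) x|⁻¹ ≤ d₀)
    (h𝒞 : ∀ x ∈ Icc a b,
      |derivWithin (derivWithin S (Icc a b)) (Icc a b) x| / (derivWithin S (Icc a b) x) ^ 2 ≤ 𝒞)
    (Sinv : ℝ → ℝ) (hSinv : ∀ x ∈ Icc a b, Sinv (S x) = x)
    (f : ℝ → ℝ) (hBV : eVariationOn f (Icc a b) ≠ ⊤) :
    eVariationOn (fun y => f (Sinv y) * |derivWithin S (Icc a b) (Sinv y)|⁻¹) (Icc c d) ≤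
      ENNReal.ofReal (d₀ * (eVariationOn f (Icc a b)).toReal + 𝒞 * ∫ x in Icc a b, |f x|) := by
  have ha : a ∈ Icc a b := left_mem_Icc.2 hab.le
  have hd₀_nonneg : 0 ≤ d₀ := (inv_nonneg.2 (abs_nonneg _)).trans (hd₀ a ha)
  have h𝒞_nonneg : 0 ≤ 𝒞 := (div_nonneg (abs_nonneg _) (sq_nonneg _)).trans (h𝒞 a ha)
  have hS_diff : DifferentiableOn ℝ S (Icc a b) := hS.differentiableOn two_ne_zero
  have hS'_diff : DifferentiableOn ℝ (derivWithin S (Icc a b)) (Icc a b) :=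
    (hS.derivWithin (m := 1) (uniqueDiffOn_Icc hab) one_add_one_eq_two.le).differentiableOn
      one_ne_zero
  rw [← ofReal_mul_eVariationOn_add_ofReal_mul_lintegral_enorm isCompact_Icc hBV hd₀_nonneg
    h𝒞_nonneg]
  simpa only [smul_eq_mul, mul_comm (f _)] using
    single_branch_variation_estimate_general ordConnected_Icc
      (fun x hx => (hS_diff x hx).hasDerivWithinAt) (fun x hx => (hS'_diff x hx).hasDerivWithinAt)
      hS' hbij.surjOn hSinv hd₀ h𝒞 f
end

section
/- Lemma (positivity sets of nonnegative quasi-Hölder functions are almost open). Let X̂ ⊂ ℝ^m be a Borel set of finite positive Lebesgue measure, α ∈ (0,1) and ε₀ > 0. If f ∈ L¹(X̂,ν̂) is nonnegative and satisfies |f|_B < ∞, then the set {f > 0} is almost open with respect to ν̂: for ν̂-almost every x with f(x) > 0 there is an open neighborhood V of x such that ν̂(V ∖ {f > 0}) = 0. -/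
/-!
Let `ω x` be the infimum of the essential oscillations of `f` over the neighborhoods of `x`. It is
upper semicontinuous, hence measurable, and `∫ ω dν̂ ≤ ε ^ α |f|_B` for every `ε ∈ (0, ε₀]`. Letting
`ε → 0`, `ω` vanishes `ν̂`-almost everywhere.

On the other hand, for almost every `x` and every set `U` of a countable basis that contains `x`,
almost every `y ∈ U` satisfies `|f x - f y| ≤ osc (f, U)`. Where `ω x = 0`, this says that `f` is
continuous at `x` up to null sets, so `f x > 0` forces `f > 0` almost everywhere near `x`.
-/

open MeasureTheory Metric Set Filter
open scoped ENNReal NNReal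

noncomputable section

abbrev Eu (m : ℕ) := EuclideanSpace ℝ (Fin m)

/-- Essential oscillation of `f` over a set `Ω` (the essential diameter of the values of `f`
on `Ω`, which equals `esssup f - essinf f` on `Ω`). -/
def eosc {m : ℕ} (f : Eu m → ℝ) (Ω : Set (Eu m)) : ℝ≥0∞ :=
  sInf {C : ℝ≥0∞ | ∀ᵐ x ∂(volume.restrict Ω), ∀ᵐ y ∂(volume.restrict Ω), edist (f x) (f y) ≤ C}

/-- The normalized Lebesgue measure on `Xhat`. -/
def nuhat {m : ℕ} (Xhat : Set (Eu m)) : Measure (Eu m) :=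
  (volume Xhat)⁻¹ • volume.restrict Xhat

/-- The quasi-Hölder seminorm `|f|_B = sup_{0<ε≤ε₀} ε^{-α} ∫ osc(f, B_ε(x)) dν̂(x)`. -/
def qhSemi {m : ℕ} (Xhat : Set (Eu m)) (α ε₀ : ℝ) (f : Eu m → ℝ) : ℝ≥0∞ :=
  ⨆ ε ∈ Set.Ioc (0:ℝ) ε₀,
    ENNReal.ofReal (ε ^ (-α)) * ∫⁻ x, eosc f (ball x ε) ∂(nuhat Xhat)

/-- The quasi-Hölder norm `‖f‖_B = ‖f‖_{L¹(ν̂)} + |f|_B`. -/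
def qhNorm {m : ℕ} (Xhat : Set (Eu m)) (α ε₀ : ℝ) (f : Eu m → ℝ) : ℝ :=
  (∫ x, |f x| ∂(nuhat Xhat)) + (qhSemi Xhat α ε₀ f).toReal

/-- A set `U ⊆ Xhat` is almost open with respect to `ν̂` if for `ν̂`-a.e. `x ∈ U` there is an
open neighborhood `V` of `x` with `ν̂(V ∖ U) = 0`. -/
def AlmostOpen {m : ℕ} (νh : Measure (Eu m)) (U : Set (Eu m)) : Prop :=
  ∀ᵐ x ∂νh, x ∈ U → ∃ V : Set (Eu m), IsOpen V ∧ x ∈ V ∧ νh (V \ U) = 0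

open scoped Topology

section EssentialOscillation

variable {X Y : Type*} [MeasurableSpace X] [PseudoEMetricSpace Y] {μ ν : Measure X} {f : X → Y}

/-- The essential diameter of the values of `f` with respect to `μ`. The essential oscillation over
a set `s` is `essDiam f (μ.restrict s)`, and `eosc f s` is definitionally the case `μ = volume`. -/
def essDiam (f : X → Y) (μ : Measure X) : ℝ≥0∞ :=
  sInf {C : ℝ≥0∞ | ∀ᵐ x ∂μ, ∀ᵐ y ∂μ, edist (f x) (f y) ≤ C}

lemma essDiam_mono (h : μ ≪ ν) : essDiam f μ ≤ essDiam f ν :=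
  sInf_le_sInf <| ofPred_subset_ofPred.2 fun _ hC ↦ h.ae_le (hC.mono fun _ hx ↦ h.ae_le hx)

lemma ae_ae_edist_le_essDiam (f : X → Y) (μ : Measure X) :
    ∀ᵐ x ∂μ, ∀ᵐ y ∂μ, edist (f x) (f y) ≤ essDiam f μ := by
  have top_mem : ⊤ ∈ {C : ℝ≥0∞ | ∀ᵐ x ∂μ, ∀ᵐ y ∂μ, edist (f x) (f y) ≤ C} :=
    ae_of_all _ fun _ ↦ ae_of_all _ fun _ ↦ le_top
  obtain ⟨C, -, hC_lim, hC⟩ := exists_seq_tendsto_sInf ⟨⊤, top_mem⟩ (OrderBot.bddBelow _)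
  filter_upwards [ae_all_iff.2 hC] with x hx
  filter_upwards [ae_all_iff.2 hx] with y hy
  exact ge_of_tendsto' hC_lim hy

variable [TopologicalSpace X]

/-- The essential oscillation of `f` at the point `x`: the counterpart of `oscillation` that
disregards `μ`-null sets. -/
def essOscillation (f : X → Y) (μ : Measure X) (x : X) : ℝ≥0∞ :=
  ⨅ U ∈ 𝓝 x, essDiam f (μ.restrict U)

lemma essOscillation_le_essDiam {U : Set X} {x : X} (hU : U ∈ 𝓝 x) :
    essOscillation f μ x ≤ essDiam f (μ.restrict U) :=
  iInf₂_le U hU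

lemma essOscillation_lt_iff {x : X} {c : ℝ≥0∞} :
    essOscillation f μ x < c ↔ ∃ U ∈ 𝓝 x, essDiam f (μ.restrict U) < c := by
  simp only [essOscillation, iInf_lt_iff, exists_prop]

lemma upperSemicontinuous_essOscillation (f : X → Y) (μ : Measure X) :
    UpperSemicontinuous (essOscillation f μ) := by
  intro x c hc
  obtain ⟨U, hU, hUc⟩ := essOscillation_lt_iff.1 hc
  filter_upwards [eventually_mem_nhds_iff.2 hU] with y hy
  exact (essOscillation_le_essDiam hy).trans_lt hUc

lemma ae_eventually_edist_le_essDiam [SecondCountableTopology X] [OpensMeasurableSpace X]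
    (f : X → Y) (μ : Measure X) :
    ∀ᵐ x ∂μ, ∀ U ∈ 𝓝 x, ∀ᶠ y in 𝓝 x ⊓ ae μ, edist (f x) (f y) ≤ essDiam f (μ.restrict U) := by
  have hbasis := TopologicalSpace.isBasis_countableBasis X
  have on_basis : ∀ᵐ x ∂μ, ∀ B ∈ TopologicalSpace.countableBasis X, x ∈ B →
      ∀ᵐ y ∂μ.restrict B, edist (f x) (f y) ≤ essDiam f (μ.restrict B) :=
    (ae_ball_iff (TopologicalSpace.countable_countableBasis X)).2 fun B hB ↦
      (ae_restrict_iff' (hbasis.isOpen hB).measurableSet).1 (ae_ae_edist_le_essDiam f _)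
  filter_upwards [on_basis] with x hx U hU
  obtain ⟨B, hB, hxB, hBU⟩ := hbasis.mem_nhds_iff.1 hU
  have hB_open := hbasis.isOpen hB
  have le_on_B : ∀ᵐ y ∂μ, y ∈ B → edist (f x) (f y) ≤ essDiam f (μ.restrict B) :=
    (ae_restrict_iff' hB_open.measurableSet).1 (hx B hB hxB)
  filter_upwards [mem_inf_of_left (hB_open.mem_nhds hxB), mem_inf_of_right le_on_B] with y hyB hy
  exact (hy hyB).trans (essDiam_mono (Measure.restrict_mono_set μ hBU).absolutelyContinuous)

lemma ae_tendsto_of_essOscillation_eq_zero [SecondCountableTopology X] [OpensMeasurableSpace X]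
    (f : X → Y) (μ : Measure X) :
    ∀ᵐ x ∂μ, essOscillation f μ x = 0 → Tendsto f (𝓝 x ⊓ ae μ) (𝓝 (f x)) := by
  filter_upwards [ae_eventually_edist_le_essDiam f μ] with x hx hosc
  refine EMetric.tendsto_nhds.2 fun c hc ↦ ?_
  obtain ⟨U, hU, hUc⟩ := essOscillation_lt_iff.1 (hosc.trans_lt hc)
  filter_upwards [hx U hU] with y hy
  exact (edist_comm (f x) (f y) ▸ hy).trans_lt hUc

lemma exists_isOpen_measure_diff_eq_zero {s : Set X} {x : X} (hs : s ∈ 𝓝 x ⊓ ae μ) :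
    ∃ V, IsOpen V ∧ x ∈ V ∧ μ (V \ s) = 0 := by
  obtain ⟨U, hU, A, hA, rfl⟩ := mem_inf_iff.1 hs
  obtain ⟨V, hVU, hV, hxV⟩ := mem_nhds_iff.1 hU
  refine ⟨V, hV, hxV, measure_mono_null ?_ (mem_ae_iff.1 hA)⟩
  exact fun y hy hyA ↦ hy.2 ⟨hVU hy.1, hyA⟩

end EssentialOscillation

lemma ae_essOscillation_eq_zero {X Y : Type*} [PseudoMetricSpace X] [MeasurableSpace X]
    [OpensMeasurableSpace X] [PseudoEMetricSpace Y] {μ ν : Measure X} {f : X → Y}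
    (hosc : Tendsto (fun ε ↦ ∫⁻ x, essDiam f (μ.restrict (ball x ε)) ∂ν) (𝓝[>] 0) (𝓝 0)) :
    ∀ᵐ x ∂ν, essOscillation f μ x = 0 := by
  have lintegral_eq_zero : ∫⁻ x, essOscillation f μ x ∂ν = 0 := by
    refine le_antisymm (ge_of_tendsto hosc ?_) zero_le
    filter_upwards [self_mem_nhdsWithin] with ε hε
    exact lintegral_mono fun x ↦ essOscillation_le_essDiam (ball_mem_nhds x hε)
  exact (lintegral_eq_zero_iff (upperSemicontinuous_essOscillation f μ).measurable).1
    lintegral_eq_zero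

lemma nuhat_absolutelyContinuous {m : ℕ} (Xhat : Set (Eu m)) : nuhat Xhat ≪ volume :=
  Measure.smul_absolutelyContinuous.trans Measure.restrict_le_self.absolutelyContinuous

lemma lintegral_eosc_ball_le {m : ℕ} (Xhat : Set (Eu m)) (α : ℝ) {ε₀ ε : ℝ} (f : Eu m → ℝ)
    (hε : ε ∈ Ioc 0 ε₀) :
    ∫⁻ x, eosc f (ball x ε) ∂(nuhat Xhat) ≤ ENNReal.ofReal (ε ^ α) * qhSemi Xhat α ε₀ f := by
  have rpow_mul_rpow_neg : ENNReal.ofReal (ε ^ α) * ENNReal.ofReal (ε ^ (-α)) = 1 := by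
    rw [← ENNReal.ofReal_mul (Real.rpow_nonneg hε.1.le α), ← Real.rpow_add hε.1, add_neg_cancel,
      Real.rpow_zero, ENNReal.ofReal_one]
  calc ∫⁻ x, eosc f (ball x ε) ∂(nuhat Xhat)
      = ENNReal.ofReal (ε ^ α) *
          (ENNReal.ofReal (ε ^ (-α)) * ∫⁻ x, eosc f (ball x ε) ∂(nuhat Xhat)) := by
        rw [← mul_assoc, rpow_mul_rpow_neg, one_mul]
    _ ≤ ENNReal.ofReal (ε ^ α) * qhSemi Xhat α ε₀ f := by
        gcongr
        exact le_iSup₂_of_le ε hε le_rfl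

lemma tendsto_lintegral_eosc_ball {m : ℕ} {Xhat : Set (Eu m)} {α ε₀ : ℝ} {f : Eu m → ℝ}
    (hα : 0 < α) (hε₀ : 0 < ε₀) (hqh : qhSemi Xhat α ε₀ f ≠ ⊤) :
    Tendsto (fun ε ↦ ∫⁻ x, eosc f (ball x ε) ∂(nuhat Xhat)) (𝓝[>] 0) (𝓝 0) := by
  have rpow_lim : Tendsto (fun ε : ℝ ↦ ε ^ α) (𝓝[>] 0) (𝓝 0) := by
    simpa only [Real.zero_rpow hα.ne'] using
      (Real.continuousAt_rpow_const 0 α (Or.inr hα.le)).tendsto.mono_left nhdsWithin_le_nhds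
  have bound_lim : Tendsto (fun ε ↦ ENNReal.ofReal (ε ^ α) * qhSemi Xhat α ε₀ f)
      (𝓝[>] 0) (𝓝 0) := by
    simpa only [ENNReal.ofReal_zero, zero_mul] using
      ENNReal.Tendsto.mul_const (ENNReal.tendsto_ofReal rpow_lim) (Or.inr hqh)
  refine tendsto_of_tendsto_of_tendsto_of_le_of_le' tendsto_const_nhds bound_lim
    (Eventually.of_forall fun _ ↦ zero_le) ?_
  filter_upwards [Ioc_mem_nhdsGT hε₀] with ε hε using lintegral_eosc_ball_le Xhat α f hε

theorem quasiHolder_positivity_set_almost_open_general {X Y : Type*} [PseudoMetricSpace X]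
    [SecondCountableTopology X] [MeasurableSpace X] [OpensMeasurableSpace X]
    [PseudoEMetricSpace Y] {μ ν : Measure X} (hνμ : ν ≪ μ) {f : X → Y}
    (hosc : Tendsto (fun ε ↦ ∫⁻ x, essDiam f (μ.restrict (ball x ε)) ∂ν) (𝓝[>] 0) (𝓝 0))
    {O : Set Y} (hO : IsOpen O) :
    ∀ᵐ x ∂ν, x ∈ f ⁻¹' O → ∃ V, IsOpen V ∧ x ∈ V ∧ ν (V \ f ⁻¹' O) = 0 := by
  filter_upwards [ae_essOscillation_eq_zero hosc,
    hνμ.ae_le (ae_tendsto_of_essOscillation_eq_zero f μ)] with x hx hcont hxO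
  obtain ⟨V, hV, hxV, hVO⟩ := exists_isOpen_measure_diff_eq_zero (hcont hx (hO.mem_nhds hxO))
  exact ⟨V, hV, hxV, hνμ hVO⟩

/-- **Lemma (positivity sets of nonnegative quasi-Hölder functions are almost open).**
Let `Xhat ⊂ ℝ^m` be a Borel set of finite positive Lebesgue measure, `α ∈ (0,1)` and `ε₀ > 0`.
If `f ∈ L¹(Xhat, ν̂)` is nonnegative and satisfies `|f|_B < ∞`, then `{f > 0}` is almost open
with respect to `ν̂`. -/
theorem quasiHolder_positivity_set_almost_open
    {m : ℕ} (Xhat : Set (Eu m)) (hmeas : MeasurableSet Xhat)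
    (hpos : 0 < volume Xhat) (hfin : volume Xhat < ⊤)
    (α ε₀ : ℝ) (hα : α ∈ Set.Ioo (0:ℝ) 1) (hε₀ : 0 < ε₀)
    (f : Eu m → ℝ) (hint : Integrable f (nuhat Xhat)) (hsupp : ∀ x ∉ Xhat, f x = 0)
    (hnonneg : ∀ x, 0 ≤ f x) (hqh : qhSemi Xhat α ε₀ f < ⊤) :
    AlmostOpen (nuhat Xhat) {x | 0 < f x} :=
  quasiHolder_positivity_set_almost_open_general (nuhat_absolutelyContinuous Xhat)
    (tendsto_lintegral_eosc_ball hα.1 hε₀ hqh.ne) isOpen_Ioi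

end
end
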